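/- Let F be a finite field of characteristic 2 with q = 2^n elements, and let G = C_4 × C_4 × C_2. Then the unit group of the group algebra FG is isomorphic to C_4^{3n} × C_2^{25n} × C_{2^n - 1}. -/

import Mathlib

/-- The cyclic group of order `m`, realized as `Multiplicative (ZMod m)`. -/
abbrev C (m : ℕ) : Type := Multiplicative (ZMod m)

/-!
Write `A[m]` for the `m`-torsion of an abelian group `A`. In characteristic `p` the map `u ↦ u - 1`
identifies the `p ^ k`-torsion units of `F[G]` with the kernel of the iterated Frobenius
`x ↦ x ^ p ^ k`. On a group algebra this Frobenius factors as `F[G] ↠ F[G ^ p ^ k] ↪ F[G]`: the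
power map of `G` induces the first map, and the second one combines the inclusion of `G ^ p ^ k`
with the Frobenius of `F`. Hence `|F[G]ˣ[p ^ k]| = |F| ^ (|G| - |G ^ p ^ k|)`.

If `G` has exponent dividing `p ^ 2`, then `x ^ p ^ 2 = ε(x) ^ p ^ 2` for the augmentation `ε`, so
the units of augmentation `1` are the `p ^ 2`-torsion units, and the constants `Fˣ` split them off.
A finite abelian group `A` of exponent dividing `p ^ 2` is determined by `|A|` and `|A[p]|`.
-/

section CommGroup

lemma natCard_C (m : ℕ) : Nat.card (C m) = m :=
  Nat.card_zmod m

variable {A B : Type*} [CommGroup A] [CommGroup B]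

lemma nonempty_mulEquiv_ker_prod_of_rightInverse (f : A →* B) (s : B →* A)
    (hs : Function.RightInverse s f) : Nonempty (A ≃* f.ker × B) := by
  refine ⟨(MulEquiv.ofBijective (f.ker.subtype.coprod s) ⟨?_, fun a ↦ ?_⟩).symm⟩
  · rw [injective_iff_map_eq_one]
    rintro ⟨⟨a, ha⟩, b⟩ hab
    replace hab : a * s b = 1 := hab
    obtain rfl : b = 1 := by simpa [MonoidHom.mem_ker.1 ha, hs b] using congrArg f hab
    simpa using hab
  · exact ⟨(⟨a * (s (f a))⁻¹, by simp [MonoidHom.mem_ker, hs (f a)]⟩, f a), by simp⟩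

lemma card_powMonoidHom_ker_congr (e : A ≃* B) (m : ℕ) :
    Nat.card (powMonoidHom m : A →* A).ker = Nat.card (powMonoidHom m : B →* B).ker :=
  Nat.card_congr <| e.toEquiv.subtypeEquiv fun a ↦ by simp [MonoidHom.mem_ker, ← map_pow]

lemma card_powMonoidHom_ker_prod (m : ℕ) :
    Nat.card (powMonoidHom m : A × B →* A × B).ker =
      Nat.card (powMonoidHom m : A →* A).ker * Nat.card (powMonoidHom m : B →* B).ker := by
  have hker : (powMonoidHom m : A × B →* A × B).ker =
      (powMonoidHom m : A →* A).ker.prod (powMonoidHom m : B →* B).ker := by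
    rw [← MonoidHom.ker_prodMap]; rfl
  rw [hker, Nat.card_congr (Subgroup.prodEquiv _ _).toEquiv, Nat.card_prod]

lemma card_powMonoidHom_ker_pi (ι : Type*) [Finite ι] (m : ℕ) :
    Nat.card (powMonoidHom m : (ι → A) →* (ι → A)).ker =
      Nat.card (powMonoidHom m : A →* A).ker ^ Nat.card ι := by
  rw [← Nat.card_fun]
  exact Nat.card_congr <| (Equiv.subtypeEquivRight fun _ ↦ funext_iff).trans
    (Equiv.subtypePiEquivPi (p := fun _ a ↦ a ∈ (powMonoidHom m : A →* A).ker))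

lemma exists_mulEquiv_pi_zmod_of_exponent_dvd [Finite A] {N : ℕ}
    (hN : Monoid.exponent A ∣ N) :
    ∃ (ι : Type) (_ : Fintype ι) (m : ι → ℕ), (∀ i, 1 < m i) ∧ (∀ i, m i ∣ N) ∧
      Nonempty (A ≃* ∀ i, C (m i)) := by
  classical
  obtain ⟨ι, _, m, hm, ⟨e⟩⟩ := CommGroup.equiv_prod_multiplicative_zmod_of_finite A
  refine ⟨ι, inferInstance, m, hm, fun i ↦ ?_, ⟨e⟩⟩
  have hdvd := Monoid.exponent_dvd_of_monoidHom
    (e.symm.toMonoidHom.comp (MonoidHom.mulSingle (fun i ↦ C (m i)) i))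
    (e.symm.injective.comp (Pi.mulSingle_injective (M := fun i ↦ C (m i)) i))
  rw [IsCyclic.exponent_eq_card, natCard_C] at hdvd
  exact hdvd.trans hN

lemma nonempty_pi_zmod_mulEquiv_of_eq_or_eq {ι : Type*} {m : ι → ℕ} {a b : ℕ}
    (hm : ∀ i, m i = a ∨ m i = b) :
    Nonempty ((∀ i, C (m i)) ≃* ({i // m i = a} → C a) × ({i // m i ≠ a} → C b)) := by
  let split : (∀ i, C (m i)) ≃* (∀ i : {i // m i = a}, C (m i)) × (∀ i : {i // m i ≠ a}, C (m i)) :=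
    { Equiv.piEquivPiSubtypeProd (m · = a) (fun i ↦ C (m i)) with map_mul' := fun _ _ ↦ rfl }
  let cyclicCongr {k l : ℕ} (h : k = l) : C k ≃* C l := mulEquivOfCyclicCardEq (by rw [h])
  exact ⟨split.trans <| .prodCongr (.piCongrRight fun i ↦ cyclicCongr i.2)
    (.piCongrRight fun i ↦ cyclicCongr ((hm i).resolve_left i.2))⟩

lemma card_pi_zmod_prod_pi_zmod (a b r s : ℕ) :
    Nat.card ((Fin r → C a) × (Fin s → C b)) = a ^ r * b ^ s := by
  simp only [Nat.card_prod, Nat.card_fun, natCard_C, Nat.card_fin]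

lemma card_powMonoidHom_ker_pi_zmod_prod_pi_zmod (a b r s m : ℕ) [NeZero a] [NeZero b] :
    Nat.card (powMonoidHom m : ((Fin r → C a) × (Fin s → C b)) →* _).ker =
      a.gcd m ^ r * b.gcd m ^ s := by
  rw [card_powMonoidHom_ker_prod, card_powMonoidHom_ker_pi, card_powMonoidHom_ker_pi,
    IsCyclic.card_powMonoidHom_ker, IsCyclic.card_powMonoidHom_ker, natCard_C, natCard_C,
    Nat.card_fin, Nat.card_fin]

variable {p : ℕ} [Fact p.Prime]

lemma exists_mulEquiv_of_exponent_dvd_prime_sq [Finite A] (hA : Monoid.exponent A ∣ p ^ 2) :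
    ∃ r s : ℕ, Nonempty (A ≃* (Fin r → C (p ^ 2)) × (Fin s → C p)) := by
  obtain ⟨ι, _, m, hm_one, hm_dvd, ⟨e⟩⟩ := exists_mulEquiv_pi_zmod_of_exponent_dvd hA
  have hm (i : ι) : m i = p ^ 2 ∨ m i = p := by
    obtain ⟨k, hk, hmk⟩ := (Nat.dvd_prime_pow Fact.out).1 (hm_dvd i)
    have := hm_one i
    interval_cases k <;> simp_all
  obtain ⟨e'⟩ := nonempty_pi_zmod_mulEquiv_of_eq_or_eq hm
  exact ⟨_, _, ⟨(e.trans e').trans <| .prodCongr (.arrowCongr (Finite.equivFin _) (.refl _))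
    (.arrowCongr (Finite.equivFin _) (.refl _))⟩⟩

lemma nonempty_mulEquiv_of_exponent_dvd_prime_sq [Finite A] (hA : Monoid.exponent A ∣ p ^ 2)
    {r s : ℕ} (hcard : Nat.card A = p ^ (2 * r + s))
    (hker : Nat.card (powMonoidHom p : A →* A).ker = p ^ (r + s)) :
    Nonempty (A ≃* (Fin r → C (p ^ 2)) × (Fin s → C p)) := by
  obtain ⟨r', s', ⟨e⟩⟩ := exists_mulEquiv_of_exponent_dvd_prime_sq hA
  have pow_inj := Nat.pow_right_injective (Fact.out : p.Prime).two_le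
  have hcard' : 2 * r' + s' = 2 * r + s := pow_inj <| by
    simp only [← hcard, Nat.card_congr e.toEquiv, card_pi_zmod_prod_pi_zmod, pow_add, pow_mul]
  have hker' : r' + s' = r + s := pow_inj <| by
    simp only [← hker, card_powMonoidHom_ker_congr e, card_powMonoidHom_ker_pi_zmod_prod_pi_zmod,
      Nat.gcd_eq_right (dvd_pow_self p two_ne_zero), Nat.gcd_self, pow_add]
  obtain ⟨rfl, rfl⟩ : r' = r ∧ s' = s := by omega
  exact ⟨e⟩

end CommGroup

section Ring

lemma card_ker_mul_card_of_surjective {R S : Type*} [Ring R] [Ring S] {f : R →+* S}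
    (hf : Function.Surjective f) : Nat.card (RingHom.ker f) * Nat.card S = Nat.card R := by
  rw [Submodule.card_eq_card_quotient_mul_card (RingHom.ker f),
    Nat.card_congr (RingHom.quotientKerEquivOfSurjective hf).toEquiv]

variable (R : Type*) [CommRing R] (p : ℕ) [ExpChar R p] (k : ℕ)

lemma card_rootsOfUnity_expChar_pow :
    Nat.card (rootsOfUnity (p ^ k) R) = Nat.card (RingHom.ker (iterateFrobenius R p k)) := by
  have : NeZero (p ^ k) := ⟨(expChar_pow_pos R p k).ne'⟩
  have sub_mem (u : rootsOfUnity (p ^ k) R) :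
      ((u : Rˣ) : R) - 1 ∈ RingHom.ker (iterateFrobenius R p k) := by
    rw [RingHom.mem_ker, iterateFrobenius_def, sub_pow_expChar_pow, one_pow,
      (mem_rootsOfUnity' _ _).1 u.2, sub_self]
  have add_pow (x : RingHom.ker (iterateFrobenius R p k)) : ((x : R) + 1) ^ p ^ k = 1 := by
    rw [add_pow_expChar_pow, ← iterateFrobenius_def, RingHom.mem_ker.1 x.2, one_pow, zero_add]
  exact Nat.card_congr
    { toFun u := ⟨((u : Rˣ) : R) - 1, sub_mem u⟩
      invFun x := rootsOfUnity.mkOfPowEq _ (add_pow x)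
      left_inv u := by ext; simp
      right_inv x := by ext; simp }

lemma card_powMonoidHom_ker_rootsOfUnity {M : Type*} [CommMonoid M] {m l : ℕ} (h : m ∣ l) :
    Nat.card (powMonoidHom m : rootsOfUnity l M →* _).ker = Nat.card (rootsOfUnity m M) := by
  have hmem (u : rootsOfUnity l M) :
      u ∈ (powMonoidHom m : rootsOfUnity l M →* _).ker ↔ (u : Mˣ) ∈ rootsOfUnity m M := by
    simp [MonoidHom.mem_ker, Subtype.ext_iff]
  exact Nat.card_congr <| (Equiv.subtypeEquivRight hmem).trans <|
    Equiv.subtypeSubtypeEquivSubtype fun hu ↦ rootsOfUnity_le_of_dvd h hu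

end Ring

section MonoidAlgebra

open MonoidAlgebra

lemma mapDomainRingHom_surjective (R : Type*) [Semiring R] {M N : Type*} [Monoid M] [Monoid N]
    {f : M →* N} (hf : Function.Surjective f) : Function.Surjective (mapDomainRingHom R f) := by
  intro y
  induction y using MonoidAlgebra.induction_linear with
  | zero => exact ⟨0, map_zero _⟩
  | add _ _ hx hy =>
    obtain ⟨x, rfl⟩ := hx
    obtain ⟨y, rfl⟩ := hy
    exact ⟨x + y, map_add _ _ _⟩
  | single n r =>
    obtain ⟨m, rfl⟩ := hf n
    exact ⟨single m r, mapDomain_single⟩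

lemma card_monoidAlgebra (R M : Type*) [Semiring R] [Finite M] :
    Nat.card (MonoidAlgebra R M) = Nat.card R ^ Nat.card M := by
  rw [Nat.card_congr (coeffEquiv.trans Finsupp.equivFunOnFinite), Nat.card_fun]

instance finite_monoidAlgebra (R M : Type*) [Semiring R] [Finite R] [Finite M] :
    Finite (MonoidAlgebra R M) :=
  .of_equiv _ (coeffEquiv.trans Finsupp.equivFunOnFinite).symm

instance expChar_monoidAlgebra (R M : Type*) [CommSemiring R] [Monoid M] (p : ℕ) [ExpChar R p] :
    ExpChar (MonoidAlgebra R M) p :=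
  expChar_of_injective_algebraMap (FaithfulSMul.algebraMap_injective R _) p

/-- The augmentation of a monoid algebra, which sends an element to the sum of its coefficients. -/
noncomputable def augmentation (R M : Type*) [CommSemiring R] [Monoid M] :
    MonoidAlgebra R M →ₐ[R] R :=
  MonoidAlgebra.lift R R M 1

variable (R : Type*) [CommRing R] {G : Type*} [CommGroup G] (p k : ℕ) [ExpChar R p]

lemma iterateFrobenius_monoidAlgebra :
    iterateFrobenius (MonoidAlgebra R G) p k =
      (mapDomainRingHom R (powMonoidHom (p ^ k) : G →* G).range.subtype).comp
        ((mapRingHom _ (iterateFrobenius R p k)).comp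
          (mapDomainRingHom R (powMonoidHom (p ^ k) : G →* G).rangeRestrict)) := by
  apply MonoidAlgebra.ringHom_ext <;> simp [iterateFrobenius_def, single_pow]

lemma ker_iterateFrobenius_monoidAlgebra [IsReduced R] :
    RingHom.ker (iterateFrobenius (MonoidAlgebra R G) p k) =
      RingHom.ker (mapDomainRingHom R (powMonoidHom (p ^ k) : G →* G).rangeRestrict) := by
  rw [iterateFrobenius_monoidAlgebra,
    RingHom.ker_comp_of_injective _ (mapDomain_injective (Subgroup.subtype_injective _)),
    RingHom.ker_comp_of_injective _ (map_injective _ (iterateFrobenius_inj R p k))]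

lemma card_rootsOfUnity_monoidAlgebra_mul_card [IsReduced R] [Finite G] :
    Nat.card (rootsOfUnity (p ^ k) (MonoidAlgebra R G)) *
        Nat.card R ^ Nat.card (powMonoidHom (p ^ k) : G →* G).range =
      Nat.card R ^ Nat.card G := by
  rw [card_rootsOfUnity_expChar_pow, ker_iterateFrobenius_monoidAlgebra, ← card_monoidAlgebra,
    ← card_monoidAlgebra, card_ker_mul_card_of_surjective]
  exact mapDomainRingHom_surjective R (MonoidHom.rangeRestrict_surjective _)

variable {p k}

lemma card_rootsOfUnity_monoidAlgebra [IsReduced R] [Finite G] {n l : ℕ}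
    (hR : Nat.card R = p ^ n)
    (hl : l + n * Nat.card (powMonoidHom (p ^ k) : G →* G).range = n * Nat.card G) :
    Nat.card (rootsOfUnity (p ^ k) (MonoidAlgebra R G)) = p ^ l := by
  have hmul := card_rootsOfUnity_monoidAlgebra_mul_card R (G := G) p k
  rw [hR, ← pow_mul, ← pow_mul, ← hl, pow_add] at hmul
  exact Nat.eq_of_mul_eq_mul_right (pow_pos (expChar_pos R p) _) hmul

lemma iterateFrobenius_monoidAlgebra_of_exponent_dvd (hG : Monoid.exponent G ∣ p ^ k) :
    iterateFrobenius (MonoidAlgebra R G) p k =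
      (algebraMap R (MonoidAlgebra R G)).comp
        ((iterateFrobenius R p k).comp (augmentation R G).toRingHom) := by
  have hpow := Monoid.exponent_dvd_iff_forall_pow_eq_one.1 hG
  apply MonoidAlgebra.ringHom_ext <;>
    simp [iterateFrobenius_def, single_pow, augmentation, hpow]

lemma ker_unitsMap_augmentation [IsReduced R] (hG : Monoid.exponent G ∣ p ^ k) :
    (Units.map (augmentation R G : MonoidAlgebra R G →* R)).ker =
      rootsOfUnity (p ^ k) (MonoidAlgebra R G) := by
  ext u
  have hpow : (u : MonoidAlgebra R G) ^ p ^ k =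
      algebraMap R _ (augmentation R G u ^ p ^ k) :=
    RingHom.congr_fun (iterateFrobenius_monoidAlgebra_of_exponent_dvd R hG) u
  rw [MonoidHom.mem_ker, mem_rootsOfUnity', hpow, Units.ext_iff,
    (FaithfulSMul.algebraMap_injective R (MonoidAlgebra R G)).eq_iff' (map_one _),
    ← iterateFrobenius_def, (iterateFrobenius_inj R p k).eq_iff' (map_one _)]
  rfl

lemma nonempty_units_monoidAlgebra_mulEquiv [IsReduced R] (hG : Monoid.exponent G ∣ p ^ k) :
    Nonempty ((MonoidAlgebra R G)ˣ ≃* rootsOfUnity (p ^ k) (MonoidAlgebra R G) × Rˣ) := by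
  rw [← ker_unitsMap_augmentation R hG]
  exact nonempty_mulEquiv_ker_prod_of_rightInverse _
    (Units.map (algebraMap R (MonoidAlgebra R G) : R →* MonoidAlgebra R G))
    fun r ↦ Units.ext ((augmentation R G).commutes (r : R))

/-- `|G ^ p| = r + 1` and `|G| = 2 * r + s + 1` parametrize the two orders without truncated
subtraction: the multiplicities are `r = |G ^ p| - 1` and `s = |G| - 2 * |G ^ p| + 1`. -/
lemma nonempty_rootsOfUnity_monoidAlgebra_mulEquiv [Fact p.Prime] [IsReduced R] [Finite R]
    [Finite G] (hG : Monoid.exponent G ∣ p ^ 2) {n r s : ℕ} (hR : Nat.card R = p ^ n)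
    (hGp : Nat.card (powMonoidHom p : G →* G).range = r + 1)
    (hcard : Nat.card G = 2 * r + s + 1) :
    Nonempty (rootsOfUnity (p ^ 2) (MonoidAlgebra R G) ≃*
      (Fin (r * n) → C (p ^ 2)) × (Fin (s * n) → C p)) := by
  have range_sq : (powMonoidHom (p ^ 2) : G →* G).range = ⊥ :=
    MonoidHom.range_eq_bot_iff.2 <| MonoidHom.ext <|
      Monoid.exponent_dvd_iff_forall_pow_eq_one.1 hG
  have card_torsion : Nat.card (rootsOfUnity (p ^ 1) (MonoidAlgebra R G)) =
      p ^ (r * n + s * n) := by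
    apply card_rootsOfUnity_monoidAlgebra R hR
    rw [pow_one, hGp, hcard]
    ring
  apply nonempty_mulEquiv_of_exponent_dvd_prime_sq
  · exact Monoid.exponent_dvd_of_forall_pow_eq_one fun u ↦ Subtype.ext u.2
  · apply card_rootsOfUnity_monoidAlgebra R hR
    rw [range_sq, Subgroup.card_bot, hcard]
    ring
  · rw [card_powMonoidHom_ker_rootsOfUnity (dvd_pow_self p two_ne_zero), ← card_torsion, pow_one]

end MonoidAlgebra

theorem unit_group_stmt_8_general (p : ℕ) [Fact p.Prime] (F : Type*) [Field F] [Finite F]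
    [CharP F p] (G : Type*) [CommGroup G] [Finite G] (hG : Monoid.exponent G ∣ p ^ 2) {n r s : ℕ}
    (hF : Nat.card F = p ^ n) (hGp : Nat.card (powMonoidHom p : G →* G).range = r + 1)
    (hcard : Nat.card G = 2 * r + s + 1) :
    Nonempty ((MonoidAlgebra F G)ˣ ≃*
      ((Fin (r * n) → C (p ^ 2)) × (Fin (s * n) → C p) × C (p ^ n - 1))) := by
  obtain ⟨eUnits⟩ := nonempty_units_monoidAlgebra_mulEquiv F hG
  obtain ⟨eTorsion⟩ := nonempty_rootsOfUnity_monoidAlgebra_mulEquiv F hG hF hGp hcard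
  have card_units : Nat.card Fˣ = Nat.card (C (p ^ n - 1)) := by
    rw [Nat.card_units, hF, natCard_C]
  exact ⟨eUnits.trans <|
    (MulEquiv.prodCongr eTorsion (mulEquivOfCyclicCardEq card_units)).trans MulEquiv.prodAssoc⟩

theorem unit_group_stmt_8 (F : Type*) [Field F] [Fintype F] [CharP F 2]
    (n : ℕ) (hn : 0 < n) (hF : Fintype.card F = 2 ^ n) :
    Nonempty ((MonoidAlgebra F (C 4 × C 4 × C 2))ˣ ≃*
      ((Fin (3 * n) → C 4) × (Fin (25 * n) → C 2) × C (2 ^ n - 1))) := by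
  refine unit_group_stmt_8_general 2 F (C 4 × C 4 × C 2) ?_ ?_ ?_ ?_
  · exact Monoid.exponent_dvd_of_forall_pow_eq_one (by decide)
  · rw [Nat.card_eq_fintype_card, hF]
  · rw [Nat.card_eq_fintype_card]; decide
  · rw [Nat.card_eq_fintype_card]; rfl
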